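/- For every n ≥ 2, α(n+1; 2, 1, 2, 3, …, n) = −Σ_{p=2}^{n} α(n; 1, 1, 2, …, p−1, p+1, …, n), where the argument of the p-th summand is the sequence of length n obtained from (1,1,2,3,…,n) by deleting the entry p. -/

import Mathlib

/-- A triangular array of size `n`, encoded as a function `ℕ → ℕ → ℤ` whose
meaningful entries are `a i j` for `1 ≤ j ≤ i ≤ n` (row `i` has entries
`a i 1, …, a i i`), normalized to be `0` outside this region. -/
def IsTri (n : ℕ) (a : ℕ → ℕ → ℤ) : Prop :=
  ∀ i j, ¬ (1 ≤ j ∧ j ≤ i ∧ i ≤ n) → a i j = 0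

/-- A Monotone Triangle of size `n`: strict increase along rows and weak
increase along North-East and South-East diagonals. -/
def IsMT (n : ℕ) (a : ℕ → ℕ → ℤ) : Prop :=
  IsTri n a ∧
  (∀ i j, 1 ≤ j → j + 1 ≤ i → i ≤ n → a i j < a i (j + 1)) ∧
  (∀ i j, 1 ≤ j → j ≤ i → i + 1 ≤ n →
    a (i + 1) j ≤ a i j ∧ a i j ≤ a (i + 1) (j + 1))

/-- A Generalized Monotone Triangle (GMT) of size `n`. -/
def IsGMT (n : ℕ) (a : ℕ → ℕ → ℤ) : Prop :=
  IsTri n a ∧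
  -- (1) each entry is weakly bounded by its SW- and SE-neighbour
  (∀ i j, 1 ≤ j → j ≤ i → i + 1 ≤ n →
    min (a (i + 1) j) (a (i + 1) (j + 1)) ≤ a i j ∧
    a i j ≤ max (a (i + 1) j) (a (i + 1) (j + 1))) ∧
  -- (2) three weakly increasing consecutive entries force strict increase above
  (∀ i j, 1 ≤ j → j + 1 ≤ i → i + 1 ≤ n →
    a (i + 1) j ≤ a (i + 1) (j + 1) → a (i + 1) (j + 1) ≤ a (i + 1) (j + 2) →
    a i j < a i (j + 1)) ∧
  -- (3) equality over a strict descent forces an equal neighbour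
  (∀ i j, 1 ≤ j → j ≤ i → i + 1 ≤ n →
    (a i j = a (i + 1) j → a (i + 1) (j + 1) < a (i + 1) j →
      2 ≤ j ∧ a i (j - 1) = a i j) ∧
    (a (i + 1) (j + 1) < a (i + 1) j → a (i + 1) (j + 1) = a i j →
      j + 1 ≤ i ∧ a i (j + 1) = a i j))

/-- The bottom row of a triangular array of size `n` is `(k 0, …, k (n-1))`
(1-indexed in the array). -/
def BottomRow (n : ℕ) (a : ℕ → ℕ → ℤ) (k : Fin n → ℤ) : Prop :=
  ∀ j : Fin n, a n (j.1 + 1) = k j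

/-- The set of Monotone Triangles of size `n` with bottom row `k`. -/
def MTset (n : ℕ) (k : Fin n → ℤ) : Set (ℕ → ℕ → ℤ) :=
  {a | IsMT n a ∧ BottomRow n a k}

/-- The set `𝒢ₙ(k)` of Generalized Monotone Triangles of size `n` with bottom row `k`. -/
def GMTset (n : ℕ) (k : Fin n → ℤ) : Set (ℕ → ℕ → ℤ) :=
  {a | IsGMT n a ∧ BottomRow n a k}

/-- The positions `(i, j)` of newcomers of a triangular array:
`a (i+1) j > a i j > a (i+1) (j+1)`. -/
def newcomersF (n : ℕ) (a : ℕ → ℕ → ℤ) : Finset (ℕ × ℕ) :=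
  ((Finset.range (n + 1)) ×ˢ (Finset.range (n + 1))).filter (fun p =>
    1 ≤ p.2 ∧ p.2 ≤ p.1 ∧ p.1 + 1 ≤ n ∧
    a p.1 p.2 < a (p.1 + 1) p.2 ∧ a (p.1 + 1) (p.2 + 1) < a p.1 p.2)

/-- The positions `(i, j)` of sign-changing pairs `(a i j, a i (j+1))` of a
triangular array: two equal consecutive entries whose interlaced neighbour
below is also equal to them. -/
def scPairsF (n : ℕ) (a : ℕ → ℕ → ℤ) : Finset (ℕ × ℕ) :=
  ((Finset.range (n + 1)) ×ˢ (Finset.range (n + 1))).filter (fun p =>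
    1 ≤ p.2 ∧ p.2 + 1 ≤ p.1 ∧ p.1 + 1 ≤ n ∧
    a p.1 p.2 = a p.1 (p.2 + 1) ∧ a (p.1 + 1) (p.2 + 1) = a p.1 p.2)

/-- `sc(A)`: the total number of newcomers and sign-changing pairs of `A`. -/
def scT (n : ℕ) (a : ℕ → ℕ → ℤ) : ℕ :=
  (newcomersF n a).card + (scPairsF n a).card

/-- `IsAlpha N f` asserts that `f` is the polynomial function
`α(N; k₁, …, k_N)`: it is given by a polynomial with rational coefficients of
degree at most `N - 1` in each variable, and its value at every strictly
increasing integer sequence equals the number of Monotone Triangles with that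
bottom row. -/
def IsAlpha (N : ℕ) (f : (Fin N → ℤ) → ℚ) : Prop :=
  (∃ P : MvPolynomial (Fin N) ℚ, (∀ i : Fin N, P.degreeOf i ≤ N - 1) ∧
    ∀ k : Fin N → ℤ, f k = MvPolynomial.eval (fun i => (k i : ℚ)) P) ∧
  (∀ k : Fin N → ℤ, StrictMono k → f k = ((MTset N k).ncard : ℚ))

/-- The strictly increasing rows that may stand directly above the row `k`. -/
def interlacingRows (n : ℕ) (k : Fin (n + 1) → ℤ) : Set (Fin n → ℤ) :=
  {l | StrictMono l ∧ ∀ j : Fin n, k j.castSucc ≤ l j ∧ l j ≤ k j.succ}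

theorem finite_interlacingRows (n : ℕ) (k : Fin (n + 1) → ℤ) :
    (interlacingRows n k).Finite :=
  (Set.finite_Icc (fun j : Fin n => k j.castSucc) (fun j => k j.succ)).subset
    fun _ hl => ⟨fun j => (hl.2 j).1, fun j => (hl.2 j).2⟩

/-- The array `a` of size `n` with the row `k` appended at the bottom. -/
def appendRow (n : ℕ) (k : Fin (n + 1) → ℤ) (a : ℕ → ℕ → ℤ) (i j : ℕ) : ℤ :=
  if i = n + 1 then (if h : 1 ≤ j ∧ j ≤ n + 1 then k ⟨j - 1, by omega⟩ else 0) else a i j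

theorem appendRow_of_ne {n : ℕ} {k : Fin (n + 1) → ℤ} {a : ℕ → ℕ → ℤ} {i : ℕ} (j : ℕ)
    (hi : i ≠ n + 1) : appendRow n k a i j = a i j := if_neg hi

theorem appendRow_last {n : ℕ} {k : Fin (n + 1) → ℤ} {a : ℕ → ℕ → ℤ} (j : ℕ) (hj : j < n + 1) :
    appendRow n k a (n + 1) (j + 1) = k ⟨j, hj⟩ := by
  have h : 1 ≤ j + 1 ∧ j + 1 ≤ n + 1 := by omega
  simp only [appendRow, if_true, dif_pos h, Nat.add_sub_cancel]

theorem appendRow_mem_MTset {n : ℕ} {k : Fin (n + 1) → ℤ} (hk : StrictMono k)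
    {l : Fin n → ℤ} (hl : l ∈ interlacingRows n k) {a : ℕ → ℕ → ℤ} (ha : a ∈ MTset n l) :
    appendRow n k a ∈ MTset (n + 1) k := by
  obtain ⟨⟨htri, hrow, hdiag⟩, hbot⟩ := ha
  refine ⟨⟨?_, ?_, ?_⟩, fun j => appendRow_last j.1 j.2⟩
  · intro i j h
    by_cases hi : i = n + 1
    · subst hi
      have h' : ¬ (1 ≤ j ∧ j ≤ n + 1) := by omega
      simp only [appendRow, if_true, dif_neg h']
    · rw [appendRow_of_ne _ hi]
      exact htri i j (by omega)
  · intro i j h1 h2 h3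
    obtain ⟨j, rfl⟩ : ∃ m, j = m + 1 := ⟨j - 1, by omega⟩
    by_cases hi : i = n + 1
    · subst hi
      rw [appendRow_last j (by omega), appendRow_last (j + 1) (by omega)]
      exact hk (by simp [Fin.lt_def])
    · rw [appendRow_of_ne _ hi, appendRow_of_ne _ hi]
      exact hrow i _ h1 h2 (by omega)
  · intro i j h1 h2 h3
    obtain ⟨j, rfl⟩ : ∃ m, j = m + 1 := ⟨j - 1, by omega⟩
    rw [appendRow_of_ne _ (show i ≠ n + 1 by omega)]
    by_cases hi : i = n
    · subst hi
      rw [appendRow_last j (by omega), appendRow_last (j + 1) (by omega),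
        hbot ⟨j, by omega⟩]
      exact hl.2 ⟨j, by omega⟩
    · rw [appendRow_of_ne _ (show i + 1 ≠ n + 1 by omega),
        appendRow_of_ne _ (show i + 1 ≠ n + 1 by omega)]
      exact hdiag i _ h1 h2 (by omega)

theorem exists_eq_appendRow {n : ℕ} {k : Fin (n + 1) → ℤ} {a : ℕ → ℕ → ℤ}
    (ha : a ∈ MTset (n + 1) k) :
    ∃ l ∈ interlacingRows n k, ∃ b ∈ MTset n l, appendRow n k b = a := by
  obtain ⟨⟨htri, hrow, hdiag⟩, hbot⟩ := ha
  refine ⟨fun j => a n (j.1 + 1), ⟨?_, fun j => ?_⟩,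
    fun i j => if i = n + 1 then 0 else a i j, ⟨⟨?_, ?_, ?_⟩, fun j => by simp⟩, ?_⟩
  · cases n with
    | zero => exact fun x => x.elim0
    | succ n =>
      exact Fin.strictMono_iff_lt_succ.2 fun j =>
        hrow (n + 1) (j.1 + 1) (by omega) (by omega) (by omega)
  · rw [← hbot, ← hbot]
    exact hdiag n (j.1 + 1) (by omega) (by omega) (by omega)
  · intro i j h
    by_cases hi : i = n + 1
    · simp [hi]
    · simp only [if_neg hi]
      exact htri i j (by omega)
  · intro i j h1 h2 h3
    simp only [if_neg (show i ≠ n + 1 by omega)]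
    exact hrow i j h1 h2 (by omega)
  · intro i j h1 h2 h3
    simp only [if_neg (show i ≠ n + 1 by omega), if_neg (show i + 1 ≠ n + 1 by omega)]
    exact hdiag i j h1 h2 (by omega)
  · funext i j
    by_cases hi : i = n + 1
    · subst hi
      by_cases hj : 1 ≤ j ∧ j ≤ n + 1
      · obtain ⟨j, rfl⟩ : ∃ m, j = m + 1 := ⟨j - 1, by omega⟩
        rw [appendRow_last j (by omega), ← hbot]
      · rw [htri _ _ (by omega)]
        simp only [appendRow, if_true, dif_neg hj]
    · rw [appendRow_of_ne _ hi, if_neg hi]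

theorem finite_MTset (n : ℕ) (k : Fin n → ℤ) : (MTset n k).Finite := by
  induction n with
  | zero =>
    refine (Set.finite_singleton (0 : ℕ → ℕ → ℤ)).subset fun a ha => ?_
    funext i j
    exact ha.1.1 i j (by omega)
  | succ n ih =>
    refine ((finite_interlacingRows n k).biUnion
      fun l _ => (ih l).image (appendRow n k)).subset fun a ha => ?_
    obtain ⟨l, hl, b, hb, rfl⟩ := exists_eq_appendRow ha
    exact Set.mem_biUnion hl ⟨b, hb, rfl⟩

theorem appendRow_injOn {n : ℕ} {k : Fin (n + 1) → ℤ} {l l' : Fin n → ℤ} {a b : ℕ → ℕ → ℤ}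
    (ha : a ∈ MTset n l) (hb : b ∈ MTset n l') (h : appendRow n k a = appendRow n k b) :
    a = b := by
  funext i j
  by_cases hi : i = n + 1
  · rw [ha.1.1 i j (by omega), hb.1.1 i j (by omega)]
  · rw [← appendRow_of_ne (k := k) (a := a) j hi, h, appendRow_of_ne j hi]

/-- Counting Monotone Triangles by their penultimate row. -/
theorem ncard_MTset_succ {n : ℕ} {k : Fin (n + 1) → ℤ} (hk : StrictMono k)
    (s : Finset (Fin n → ℤ)) (hs : ∀ l, l ∈ s ↔ l ∈ interlacingRows n k) :
    (MTset (n + 1) k).ncard = ∑ l ∈ s, (MTset n l).ncard := by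
  have hfin : ∀ l : s, Finite (MTset n l.1) := fun l => (finite_MTset n l.1).to_subtype
  let e : (Σ l : s, MTset n l.1) → MTset (n + 1) k := fun p =>
    ⟨appendRow n k p.2.1, appendRow_mem_MTset hk ((hs _).1 p.1.2) p.2.2⟩
  have he : Function.Bijective e := by
    constructor
    · rintro ⟨⟨l, hl⟩, ⟨a, ha⟩⟩ ⟨⟨l', hl'⟩, ⟨b, hb⟩⟩ h
      obtain rfl : a = b := appendRow_injOn ha hb (congrArg Subtype.val h)
      obtain rfl : l = l' := by
        funext j
        exact (ha.2 j).symm.trans (hb.2 j)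
      rfl
    · rintro ⟨a, ha⟩
      obtain ⟨l, hl, b, hb, rfl⟩ := exists_eq_appendRow ha
      exact ⟨⟨⟨l, (hs l).2 hl⟩, ⟨b, hb⟩⟩, rfl⟩
  rw [← Nat.card_coe_set_eq, ← Nat.card_congr (Equiv.ofBijective e he), Nat.card_sigma,
    ← Finset.sum_coe_sort s]
  simp only [Nat.card_coe_set_eq]

/-- The row `(x, 1, 2, …, n)`. -/
def initialRow (n : ℕ) (x : ℤ) (j : Fin (n + 1)) : ℤ := if j.1 = 0 then x else (j.1 : ℤ)

/-- The row of length `n` obtained from `(y, 1, 2, …, n)` by deleting the entry `p ≥ 1`. -/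
def deletedRow (n : ℕ) (p : ℕ) (y : ℤ) (j : Fin n) : ℤ :=
  if j.1 = 0 then y else if j.1 < p then (j.1 : ℤ) else (j.1 : ℤ) + 1

theorem strictMono_initialRow {n : ℕ} {x : ℤ} (hx : x ≤ 0) : StrictMono (initialRow n x) := by
  intro i j hij
  have : i.1 < j.1 := hij
  simp only [initialRow]
  split_ifs <;> omega

theorem strictMono_deletedRow {n p : ℕ} {y : ℤ} (hy : y ≤ 0) : StrictMono (deletedRow n p y) := by
  intro i j hij
  have : i.1 < j.1 := hij
  simp only [deletedRow]
  split_ifs <;> omega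

theorem strictMono_deletedRow_one (n : ℕ) : StrictMono (deletedRow n 1 1) := by
  intro i j hij
  have : i.1 < j.1 := hij
  simp only [deletedRow]
  split_ifs <;> omega

theorem mem_interlacingRows_initialRow {n : ℕ} (hn : 1 ≤ n) {x : ℤ} (hx : x ≤ 0)
    (l : Fin n → ℤ) :
    l ∈ interlacingRows n (initialRow n x) ↔
      l = deletedRow n 1 1 ∨ ∃ y ∈ Finset.Icc x 0, ∃ p ∈ Finset.Icc 1 n, deletedRow n p y = l := by
  constructor
  · rintro ⟨hmono, hbd⟩
    have h0 := hbd ⟨0, hn⟩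
    simp [initialRow] at h0
    have hb : ∀ j (hj : j < n), 1 ≤ j → (j : ℤ) ≤ l ⟨j, hj⟩ ∧ l ⟨j, hj⟩ ≤ j + 1 := by
      intro j hj h1
      have := hbd ⟨j, hj⟩
      simpa [initialRow, show j ≠ 0 by omega] using this
    have hup : ∀ i (hi : i < n), l ⟨i, hi⟩ = i + 1 → ∀ j (hj : j < n), i ≤ j →
        l ⟨j, hj⟩ = j + 1 := by
      intro i hi h j hj hij
      induction j, hij using Nat.le_induction with
      | base => exact h
      | succ j hij ih =>
        have h1 := ih (by omega)
        have h2 : l ⟨j, by omega⟩ < l ⟨j + 1, hj⟩ := hmono (by simp [Fin.lt_def])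
        have h3 := hb (j + 1) hj (by omega)
        push_cast at h3 ⊢
        omega
    by_cases hl0 : l ⟨0, hn⟩ = 1
    · left
      funext j
      rw [hup 0 hn (by simpa using hl0) j.1 j.2 (by omega)]
      simp only [deletedRow]
      split_ifs <;> omega
    · right
      refine ⟨l ⟨0, hn⟩, by simp only [Finset.mem_Icc]; omega, ?_⟩
      classical
      have hex : ∃ p, 1 ≤ p ∧ (p = n ∨ ∃ h : p < n, l ⟨p, h⟩ = p + 1) := ⟨n, hn, Or.inl rfl⟩
      obtain ⟨hp1, hp⟩ := Nat.find_spec hex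
      have hmin := fun m => Nat.find_min hex (m := m)
      generalize Nat.find hex = p at hp1 hp hmin
      refine ⟨p, ?_, ?_⟩
      · rcases hp with h | ⟨h, -⟩ <;> simp only [Finset.mem_Icc] <;> omega
      · funext ⟨j, hj⟩
        simp only [deletedRow]
        split_ifs with hj0 hjp
        · subst hj0; rfl
        · have h1 := hmin j hjp
          have h2 := hb j hj (by omega)
          have h3 : l ⟨j, hj⟩ ≠ j + 1 := fun h => h1 ⟨by omega, Or.inr ⟨hj, h⟩⟩
          omega
        · rcases hp with h | ⟨h, h'⟩
          · omega
          · exact (hup p h h' j hj (by omega)).symm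
  · rintro (rfl | ⟨y, hy, p, hp, rfl⟩)
    · refine ⟨strictMono_deletedRow_one n, fun j => ?_⟩
      simp only [initialRow, deletedRow, Fin.val_castSucc, Fin.val_succ, Nat.add_eq_zero_iff,
        one_ne_zero, and_false, if_false]
      constructor <;> split_ifs <;> push_cast <;> omega
    · rw [Finset.mem_Icc] at hy hp
      refine ⟨strictMono_deletedRow hy.2, fun j => ?_⟩
      simp only [initialRow, deletedRow, Fin.val_castSucc, Fin.val_succ, Nat.add_eq_zero_iff,
        one_ne_zero, and_false, if_false]
      constructor <;> split_ifs <;> push_cast <;> omega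

theorem deletedRow_injOn {n p q : ℕ} {y z : ℤ} (hp : p ∈ Finset.Icc 1 n)
    (hq : q ∈ Finset.Icc 1 n) (h : deletedRow n p y = deletedRow n q z) : y = z ∧ p = q := by
  rw [Finset.mem_Icc] at hp hq
  refine ⟨by simpa [deletedRow] using congrFun h ⟨0, by omega⟩, ?_⟩
  rcases lt_trichotomy p q with hpq | hpq | hpq
  · have := congrFun h ⟨p, by omega⟩
    simp [deletedRow, hpq, show p ≠ 0 by omega] at this
  · exact hpq
  · have := congrFun h ⟨q, by omega⟩
    simp [deletedRow, hpq, show q ≠ 0 by omega] at this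

/-- The number of Monotone Triangles with bottom row `(x, 1, 2, …, n)` for `x ≤ 0`. -/
theorem ncard_MTset_initialRow {n : ℕ} (hn : 1 ≤ n) {x : ℤ} (hx : x ≤ 0) :
    (MTset (n + 1) (initialRow n x)).ncard =
      (MTset n (deletedRow n 1 1)).ncard +
        ∑ y ∈ Finset.Icc x 0, ∑ p ∈ Finset.Icc 1 n, (MTset n (deletedRow n p y)).ncard := by
  classical
  rw [ncard_MTset_succ (strictMono_initialRow hx)
    (insert (deletedRow n 1 1)
      ((Finset.Icc x 0 ×ˢ Finset.Icc 1 n).image fun q => deletedRow n q.2 q.1)),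
    Finset.sum_insert, Finset.sum_image, Finset.sum_product]
  · rintro ⟨y, p⟩ hy ⟨z, q⟩ hz h
    simp only [Finset.coe_product, Set.mem_prod, Finset.mem_coe] at hy hz
    obtain ⟨rfl, rfl⟩ := deletedRow_injOn hy.2 hz.2 h
    rfl
  · simp only [Finset.mem_image, Finset.mem_product, Prod.exists, not_exists, not_and]
    rintro y p ⟨hy, hp⟩ h
    have := (deletedRow_injOn hp (by simp [hn]) h).1
    rw [Finset.mem_Icc] at hy
    omega
  · intro l
    rw [mem_interlacingRows_initialRow hn hx]
    simp only [Finset.mem_insert, Finset.mem_image, Finset.mem_product, Prod.exists]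
    aesop

/-- A multivariate polynomial function is a polynomial in its first variable. -/
theorem IsAlpha.exists_polynomial {N : ℕ} {f : (Fin N → ℤ) → ℚ} (hf : IsAlpha N f)
    (r : Fin N → ℤ) :
    ∃ F : Polynomial ℚ, ∀ x : ℤ, f (fun j => if j.1 = 0 then x else r j) = F.eval (x : ℚ) := by
  obtain ⟨⟨P, -, hP⟩, -⟩ := hf
  refine ⟨MvPolynomial.aeval
    (fun j : Fin N => if j.1 = 0 then Polynomial.X else Polynomial.C (r j : ℚ)) P, fun x => ?_⟩
  rw [hP, ← Polynomial.coe_evalRingHom, MvPolynomial.aeval_def, MvPolynomial.hom_eval₂,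
    MvPolynomial.eval, MvPolynomial.coe_eval₂Hom]
  congr 1
  · ext; simp
  · funext j
    split_ifs with h <;> simp

theorem Polynomial.eq_of_forall_int_neg {F G : Polynomial ℚ}
    (h : ∀ x : ℤ, x < 0 → F.eval (x : ℚ) = G.eval (x : ℚ)) : F = G := by
  refine Polynomial.eq_of_infinite_eval_eq F G
    (((Set.Iio_infinite (0 : ℤ)).image Int.cast_injective.injOn).mono ?_)
  rintro _ ⟨x, hx, rfl⟩
  exact h x hx

/-- For every `n ≥ 2`,
`α(n+1; 2,1,2,3,…,n) = -Σ_{p=2}^{n} α(n; 1,1,2,…,p-1,p+1,…,n)`,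
where the `p`-th summand's argument is `(1,1,2,…,n)` with the entry `p`
deleted. -/
theorem alpha_2123n (n : ℕ) (hn : 2 ≤ n)
    (α1 : (Fin (n + 1) → ℤ) → ℚ) (hα1 : IsAlpha (n + 1) α1)
    (α2 : (Fin n → ℤ) → ℚ) (hα2 : IsAlpha n α2) :
    α1 (fun j => if j.1 = 0 then 2 else (j.1 : ℤ)) =
      - ∑ p ∈ Finset.Icc 2 n,
          α2 (fun j => if j.1 = 0 then 1 else
            if j.1 < p then (j.1 : ℤ) else (j.1 : ℤ) + 1) := by
  have hinit : ∀ x : ℤ, x ≤ 0 → α1 (initialRow n x) = α2 (deletedRow n 1 1) +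
      ∑ y ∈ Finset.Icc x 0, ∑ p ∈ Finset.Icc 1 n, α2 (deletedRow n p y) := by
    intro x hx
    rw [hα1.2 _ (strictMono_initialRow hx), ncard_MTset_initialRow (by omega) hx,
      hα2.2 _ (strictMono_deletedRow_one n)]
    push_cast
    congr 1
    refine Finset.sum_congr rfl fun y hy => Finset.sum_congr rfl fun p _ => ?_
    rw [hα2.2 _ (strictMono_deletedRow (Finset.mem_Icc.1 hy).2)]
  obtain ⟨F, hF⟩ := hα1.exists_polynomial (fun j => (j.1 : ℤ))
  choose G hG using fun p : ℕ =>
    hα2.exists_polynomial (fun j => if j.1 < p then (j.1 : ℤ) else (j.1 : ℤ) + 1)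
  have hF' : ∀ x : ℤ, α1 (initialRow n x) = F.eval (x : ℚ) := hF
  have hG' : ∀ (p : ℕ) (y : ℤ), α2 (deletedRow n p y) = (G p).eval (y : ℚ) := hG
  have hdiff : F = F.comp (Polynomial.X + 1) + ∑ p ∈ Finset.Icc 1 n, G p := by
    refine Polynomial.eq_of_forall_int_neg fun x hx => ?_
    have h1 := hF' (x + 1)
    push_cast at h1
    simp only [Polynomial.eval_add, Polynomial.eval_comp, Polynomial.eval_X, Polynomial.eval_one,
      Polynomial.eval_finsetSum]
    rw [← hF', ← h1, hinit x hx.le, hinit (x + 1) (by omega),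
      ← Finset.insert_Icc_add_one_left_eq_Icc hx.le, Finset.sum_insert (by simp)]
    simp only [hG']
    ring
  have hstep : ∀ x : ℤ, α1 (initialRow n x) =
      α1 (initialRow n (x + 1)) + ∑ p ∈ Finset.Icc 1 n, α2 (deletedRow n p x) := by
    intro x
    have := congrArg (Polynomial.eval (x : ℚ)) hdiff
    simpa [hF', hG', Polynomial.eval_finsetSum] using this
  have h0 := hinit 0 le_rfl
  have h01 := hstep 0
  have h12 := hstep 1
  rw [Finset.Icc_self, Finset.sum_singleton] at h0
  rw [zero_add] at h01
  rw [← Finset.insert_Icc_add_one_left_eq_Icc (show 1 ≤ n by omega),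
    Finset.sum_insert (by simp)] at h12
  change α1 (initialRow n 2) = -∑ p ∈ Finset.Icc 2 n, α2 (deletedRow n p 1)
  norm_num at h12
  linarith
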